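/- For every t > 0, the random vector (K(t) − B(t), X(t)) (where X = 2K − B) has joint probability density on ℝ² given by f(y, z) = 4 y z (z − y) t^{−5/2} φ(z/√t) · 1_{0 < y < z}. In particular, the conditional density of K(t) − B(t) given X(t) = z is y ↦ 6y(z − y)/z³ on (0, z), which does not depend on t. -/

import Mathlib

open MeasureTheory ProbabilityTheory Set Filter Topology
open scoped Classical

noncomputable section

/-- The σ-algebra generated by a process `Y` up to time `t` (over times in `[0, t]`),
i.e. `σ(Y u : 0 ≤ u ≤ t)`. -/
def natSigma {Ω E : Type*} [MeasurableSpace E] (Y : ℝ → Ω → E) (t : ℝ) :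
    MeasurableSpace Ω :=
  ⨆ u : Set.Icc (0 : ℝ) t, MeasurableSpace.comap (Y u) inferInstance

/-- The σ-algebra generated by the whole (nonnegative-time) process `Y`. -/
def procSigma {Ω E : Type*} [MeasurableSpace E] (Y : ℝ → Ω → E) :
    MeasurableSpace Ω :=
  ⨆ u : Set.Ici (0 : ℝ), MeasurableSpace.comap (Y u) inferInstance

/-- `B` is a standard one-dimensional Brownian motion (with `B 0 = 0`) under `P`:
measurable, a.s. starting at `0` and continuous on `[0, ∞)`, with Gaussian increments
`B t - B s ~ N(0, t - s)` that are independent of the past. -/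
structure IsBrownianMotion {Ω : Type*} [MeasurableSpace Ω] (P : Measure Ω)
    (B : ℝ → Ω → ℝ) : Prop where
  measurable : ∀ t : ℝ, Measurable (B t)
  init : ∀ᵐ ω ∂P, B 0 ω = 0
  cont : ∀ᵐ ω ∂P, ContinuousOn (fun t => B t ω) (Set.Ici 0)
  incr_law : ∀ s t : ℝ, 0 ≤ s → s ≤ t →
    P.map (fun ω => B t ω - B s ω) = gaussianReal 0 (Real.toNNReal (t - s))
  incr_indep : ∀ s t : ℝ, 0 ≤ s → s ≤ t →
    Indep (MeasurableSpace.comap (fun ω => B t ω - B s ω) inferInstance)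
      (natSigma B s) P

/-- `W` is a standard `n`-dimensional Brownian motion started at the origin:
its coordinate processes are independent standard one-dimensional Brownian motions. -/
def IsBrownianMotionND {Ω : Type*} [MeasurableSpace Ω] (P : Measure Ω) {n : ℕ}
    (W : ℝ → Ω → EuclideanSpace ℝ (Fin n)) : Prop :=
  (∀ i : Fin n, IsBrownianMotion P (fun t ω => W t ω i)) ∧
  iIndep (fun i : Fin n => procSigma (fun t ω => W t ω i)) P

/-- The least concave majorant on `[0, ∞)` of a function `f : ℝ → ℝ`:
`t ↦ inf { c t | c concave on [0,∞) and c ≥ f on [0,∞) }`. -/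
def concaveMajorant (f : ℝ → ℝ) (t : ℝ) : ℝ :=
  sInf {y | ∃ c : ℝ → ℝ, ConcaveOn ℝ (Set.Ici 0) c ∧ (∀ u, 0 ≤ u → f u ≤ c u) ∧ y = c t}

/-- Right-hand derivative. -/
def rightDeriv (f : ℝ → ℝ) (t : ℝ) : ℝ := derivWithin f (Set.Ioi t) t

/-- `D(t)`: the first vertex (contact point of the concave majorant) at or after time `t`. -/
def firstVertex (f : ℝ → ℝ) (t : ℝ) : ℝ :=
  sInf {u | t ≤ u ∧ concaveMajorant f u = f u}

/-- The concave majorant process `K` of `B`. -/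
def Kproc {Ω : Type*} (B : ℝ → Ω → ℝ) (t : ℝ) (ω : Ω) : ℝ :=
  concaveMajorant (fun u => B u ω) t

/-- The process `X = 2K - B`. -/
def Xproc {Ω : Type*} (B : ℝ → Ω → ℝ) (t : ℝ) (ω : Ω) : ℝ :=
  2 * Kproc B t ω - B t ω

/-- The right-hand slope process `K'` of the concave majorant. -/
def Kslope {Ω : Type*} (B : ℝ → Ω → ℝ) (t : ℝ) (ω : Ω) : ℝ :=
  rightDeriv (fun u => Kproc B u ω) t

/-- The process `D` of first vertices: `D(t) = inf {u ≥ t : K u = B u}`. -/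
def Dproc {Ω : Type*} (B : ℝ → Ω → ℝ) (t : ℝ) (ω : Ω) : ℝ :=
  firstVertex (fun u => B u ω) t

/-- A process `Y` is Markov (w.r.t. its natural filtration): for all `0 ≤ s ≤ t`,
`σ(Y t)` is conditionally independent of `σ(Y u : 0 ≤ u ≤ s)` given `σ(Y s)`. -/
def IsMarkov {Ω E : Type*} [mΩ : MeasurableSpace Ω] [StandardBorelSpace Ω]
    [MeasurableSpace E] (P : Measure Ω) [IsFiniteMeasure P] (Y : ℝ → Ω → E) : Prop :=
  ∀ s t : ℝ, 0 ≤ s → s ≤ t →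
    ∃ hs : MeasurableSpace.comap (Y s) inferInstance ≤ mΩ,
      CondIndep (MeasurableSpace.comap (Y s) inferInstance)
        (MeasurableSpace.comap (Y t) inferInstance)
        (natSigma Y s) hs P

/-- The standard normal density `φ`. -/
def stdGaussianPDF (x : ℝ) : ℝ := (Real.sqrt (2 * Real.pi))⁻¹ * Real.exp (-(x ^ 2) / 2)

/-- The claimed joint density of `(K(t) - B(t), X(t))`:
`f(y, z) = 4 y z (z - y) t^(-5/2) φ(z/√t) 1_{0 < y < z}`. -/
def jointDensKBX (t y z : ℝ) : ℝ :=
  if 0 < y ∧ y < z then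
    4 * y * z * (z - y) * t ^ (-(5 : ℝ) / 2) * stdGaussianPDF (z / Real.sqrt t)
  else 0

/-!
Fix `t` and `y > 0`. Since `K` is concave, `K t ≤ B t + y` exactly when some line through
`(t, B t + y)` dominates `B`. After time `t` its slope must be at least the least slope `ζ` of a
line with intercept `y` above the path `s ↦ B (t + s) - B t`. Before time `t`, the time inversion
`u = t² / (t + s)` turns lines into lines and the condition into the same one for an independent
Brownian motion with least slope `ζ'`, so the event is `ζ' + ζ ≤ (B t + y) / t`.

By the exponential martingale, a Brownian motion crosses `s ↦ y + l s` with probability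
`exp (-2 l y)`, i.e. the least slopes are exponential of rate `2 y`; moreover `ζ'`, `ζ`, `B t` are
independent. Hence, given `B t = b`, the event has probability `G (2 y (b + y)⁺ / t)`, where `G` is
the distribution function of the Gamma law with shape `2`, and differentiating in `y` gives the
density of `(K t - B t, B t)`.
-/

open scoped NNReal ENNReal

section Bridge

variable {Ω : Type*} {B : ℝ → Ω → ℝ}

lemma measurable_natSigma {u s : ℝ} (hu : 0 ≤ u) (hus : u ≤ s) :
    Measurable[natSigma B s] (B u) :=
  measurable_iff_comap_le.2 <|
    le_iSup (fun u : Icc (0 : ℝ) s ↦ MeasurableSpace.comap (B u) inferInstance) ⟨u, hu, hus⟩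

variable [MeasurableSpace Ω] {P : Measure Ω}

lemma IsBrownianMotion.hasIndepIncrements [IsProbabilityMeasure P] (hB : IsBrownianMotion P B) :
    HasIndepIncrements (fun s : ℝ≥0 ↦ B s) P := by
  refine HasIndepIncrements.of_nat fun τ hτ _ ↦ ?_
  rw [iIndepFun_iff_measure_inter_preimage_eq_mul]
  intro S
  induction S using Finset.induction_on_max with
  | empty => simp
  | insert a S hS ih =>
    intro sets hsets
    rw [Finset.set_biInter_insert, Finset.prod_insert fun h ↦ (hS a h).false,
      ← ih fun i hi ↦ hsets i (Finset.mem_insert_of_mem hi)]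
    refine (Indep_iff _ _ _).1 (hB.incr_indep (τ a) (τ (a + 1)) (τ a).2
      (mod_cast hτ (Nat.le_succ a))) _ _ ⟨sets a, hsets a (Finset.mem_insert_self _ _), rfl⟩ ?_
    refine Finset.measurableSet_biInter _ fun i hi ↦ ?_
    have hmeas {j : ℕ} (hj : j ≤ a) : Measurable[natSigma B (τ a)] (B (τ j)) :=
      measurable_natSigma (τ j).2 (mod_cast hτ hj)
    exact ((hmeas (hS i hi)).sub (hmeas (hS i hi).le)) (hsets i (Finset.mem_insert_of_mem hi))

lemma IsBrownianMotion.hasLaw_eval (hB : IsBrownianMotion P B) (s : ℝ≥0) :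
    HasLaw (B s) (gaussianReal 0 s) P where
  aemeasurable := (hB.measurable s).aemeasurable
  map_eq := by
    have hincr := hB.incr_law 0 s le_rfl s.2
    rw [sub_zero, Real.toNNReal_coe] at hincr
    rw [← hincr]
    refine Measure.map_congr ?_
    filter_upwards [hB.init] with ω hω
    simp [hω]

lemma IsBrownianMotion.isBrownianReal [IsProbabilityMeasure P] (hB : IsBrownianMotion P B) :
    IsBrownianReal (fun s : ℝ≥0 ↦ B s) P where
  toIsPreBrownianReal :=
    hB.hasIndepIncrements.isPreBrownianReal_of_hasLaw hB.hasLaw_eval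
  cont := by
    filter_upwards [hB.cont] with ω hω
    exact continuousOn_iff_continuous_domRestrict.1 hω

end Bridge

section ExponentialMartingale

lemma lintegral_exp_gaussianReal (l : ℝ) (v : ℝ≥0) :
    ∫⁻ x, ENNReal.ofReal (Real.exp (2 * l * (x - l * v))) ∂gaussianReal 0 v = 1 := by
  have hexp (x : ℝ) : Real.exp (2 * l * (x - l * v))
      = Real.exp (-(2 * l ^ 2 * v)) * Real.exp (2 * l * x) := by
    rw [← Real.exp_add]; ring_nf
  simp_rw [hexp]
  rw [← ofReal_integral_eq_lintegral_ofReal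
      ((integrable_exp_mul_gaussianReal (2 * l)).const_mul _) (ae_of_all _ fun x ↦ by positivity),
    integral_const_mul]
  have hmgf := congrFun (mgf_id_gaussianReal (μ := 0) (v := v)) (2 * l)
  rw [mgf] at hmgf
  simp only [id_eq] at hmgf
  rw [hmgf, ← Real.exp_add]
  ring_nf
  simp

variable {Ω : Type*}

/-- The process `X s - l s`, which exceeds the level `y` exactly where `X` lies above the line with
intercept `y` and slope `l`. -/
def drifted (X : ℝ≥0 → Ω → ℝ) (l : ℝ) (s : ℝ≥0) (ω : Ω) : ℝ := X s ω - l * s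

/-- The exponential martingale of a Brownian motion `X` relative to the slope `l`: the scale
function `x ↦ exp (2 l x)` of Brownian motion with drift `-l`, evaluated along `drifted X l`. -/
def expMart (X : ℝ≥0 → Ω → ℝ) (l : ℝ) (s : ℝ≥0) (ω : Ω) : ℝ≥0∞ :=
  ENNReal.ofReal (Real.exp (2 * l * drifted X l s ω))

/-- The σ-algebra generated by the process `X` up to time `s`, encoded as a pullback of the product
σ-algebra because this is the form in which `IsPreBrownianReal.indepFun_shift` produces it. -/
abbrev pastSigma (X : ℝ≥0 → Ω → ℝ) (s : ℝ≥0) : MeasurableSpace Ω :=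
  MeasurableSpace.comap (fun ω (u : Iic s) ↦ X u ω) MeasurableSpace.pi

variable {X : ℝ≥0 → Ω → ℝ}

lemma measurable_pastSigma {u s : ℝ≥0} (hus : u ≤ s) : Measurable[pastSigma X s] (X u) :=
  (measurable_pi_apply (⟨u, hus⟩ : Iic s)).comp (comap_measurable fun ω (u : Iic s) ↦ X u ω)

lemma measurable_drifted_pastSigma (l : ℝ) {u s : ℝ≥0} (hus : u ≤ s) :
    Measurable[pastSigma X s] (drifted X l u) :=
  (measurable_pastSigma hus).sub_const _

lemma measurable_expMart_pastSigma (l : ℝ) {u s : ℝ≥0} (hus : u ≤ s) :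
    Measurable[pastSigma X s] (expMart X l u) :=
  ((measurable_drifted_pastSigma l hus).const_mul _).exp.ennreal_ofReal

variable [MeasurableSpace Ω] {P : Measure Ω}

lemma pastSigma_le (hXm : ∀ s, Measurable (X s)) (s : ℝ≥0) : pastSigma X s ≤ ‹MeasurableSpace Ω› :=
  (measurable_pi_lambda (fun ω (u : Iic s) ↦ X u ω) fun u ↦ hXm u).comap_le

lemma lintegral_expMart_zero (hX : IsPreBrownianReal X P) (l : ℝ) :
    ∫⁻ ω, expMart X l 0 ω ∂P = 1 := by
  have := hX.isGaussianProcess.isProbabilityMeasure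
  calc ∫⁻ ω, expMart X l 0 ω ∂P = ∫⁻ _, 1 ∂P := lintegral_congr_ae <| by
        filter_upwards [hX.eval_zero_ae_eq_zero] with ω hω
        simp [expMart, drifted, hω]
    _ = 1 := by simp

lemma lintegral_mul_expMart (hX : IsPreBrownianReal X P) (hXm : ∀ s, Measurable (X s)) (l : ℝ)
    {s t : ℝ≥0} (hst : s ≤ t) {g : Ω → ℝ≥0∞} (hg : Measurable[pastSigma X s] g) :
    ∫⁻ ω, g ω * expMart X l t ω ∂P = ∫⁻ ω, g ω * expMart X l s ω ∂P := by
  obtain ⟨u, rfl⟩ := exists_add_of_le hst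
  set D : Ω → ℝ := fun ω ↦ X (s + u) ω - X s ω with hD
  set N : Ω → ℝ≥0∞ := fun ω ↦ ENNReal.ofReal (Real.exp (2 * l * (D ω - l * u)))
  have hDm : Measurable D := (hXm _).sub (hXm _)
  have hNm : Measurable[MeasurableSpace.comap D inferInstance] N :=
    (((comap_measurable D).sub_const _).const_mul _).exp.ennreal_ofReal
  have hN : ∫⁻ ω, N ω ∂P = 1 := by
    rw [← lintegral_exp_gaussianReal l u, ← ((hX.shift s).hasLaw_eval u).map_eq,
      lintegral_map (by fun_prop) hDm]
  have hindep : Indep (pastSigma X s) (MeasurableSpace.comap D inferInstance) P :=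
    ((hX.indepFun_shift s).comp (measurable_pi_apply u) measurable_id).symm
  have hsplit (ω : Ω) : g ω * expMart X l (s + u) ω = (g * expMart X l s) ω * N ω := by
    rw [Pi.mul_apply, mul_assoc, expMart, expMart, ← ENNReal.ofReal_mul (Real.exp_nonneg _),
      ← Real.exp_add]
    congr 4
    simp only [hD, drifted, NNReal.coe_add]
    ring
  calc ∫⁻ ω, g ω * expMart X l (s + u) ω ∂P = ∫⁻ ω, (g * expMart X l s) ω * N ω ∂P := by
        simp_rw [hsplit]
    _ = (∫⁻ ω, (g * expMart X l s) ω ∂P) * ∫⁻ ω, N ω ∂P :=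
        lintegral_mul_eq_lintegral_mul_lintegral_of_independent_measurableSpace (pastSigma_le hXm s)
          hDm.comap_le hindep (hg.mul (measurable_expMart_pastSigma l le_rfl)) hNm
    _ = ∫⁻ ω, g ω * expMart X l s ω ∂P := by simp only [hN, mul_one, Pi.mul_apply]

end ExponentialMartingale

section FirstPassage

variable {Ω : Type*}

/-- The event that the discrete-time process `Y` exceeds the level `y` for the first time at `k`. -/
def firstPassage (Y : ℕ → Ω → ℝ) (y : ℝ) (k : ℕ) : Set Ω :=
  {ω | y < Y k ω ∧ ∀ j < k, Y j ω ≤ y}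

/-- The function `exp (-2 l Y)` evaluated at the first passage of `Y` above `y`, and `0` if there is
none up to time `N`. It is the density, relative to the exponential martingale, of the event that
the passage takes place. -/
def passageWeight (Y : ℕ → Ω → ℝ) (l y : ℝ) (N : ℕ) (ω : Ω) : ℝ≥0∞ :=
  ∑ k ∈ Finset.range (N + 1),
    (firstPassage Y y k).indicator (fun ω ↦ ENNReal.ofReal (Real.exp (-(2 * l * Y k ω)))) ω

variable {Y : ℕ → Ω → ℝ} {y : ℝ}

lemma firstPassage_unique {ω : Ω} {j k : ℕ} (hj : ω ∈ firstPassage Y y j)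
    (hk : ω ∈ firstPassage Y y k) : j = k :=
  le_antisymm (not_lt.1 fun h ↦ (hj.2 k h).not_gt hk.1) (not_lt.1 fun h ↦ (hk.2 j h).not_gt hj.1)

lemma exists_mem_firstPassage {ω : Ω} {k : ℕ} (hk : y < Y k ω) :
    ∃ j ≤ k, ω ∈ firstPassage Y y j := by
  have hex : ∃ j, y < Y j ω := ⟨k, hk⟩
  exact ⟨Nat.find hex, Nat.find_min' hex hk, Nat.find_spec hex,
    fun j hj ↦ not_lt.1 (Nat.find_min hex hj)⟩

lemma biUnion_firstPassage (N : ℕ) :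
    ⋃ k ∈ Finset.range (N + 1), firstPassage Y y k = {ω | ∃ k ≤ N, y < Y k ω} := by
  ext ω
  simp only [mem_iUnion, Finset.mem_range, Order.lt_add_one_iff, exists_prop, mem_ofPred_eq]
  constructor
  · rintro ⟨k, hkN, hk⟩
    exact ⟨k, hkN, hk.1⟩
  · rintro ⟨k, hkN, hk⟩
    obtain ⟨j, hjk, hj⟩ := exists_mem_firstPassage hk
    exact ⟨j, hjk.trans hkN, hj⟩

lemma passageWeight_eq {l : ℝ} {N k : ℕ} {ω : Ω} (hk : ω ∈ firstPassage Y y k) (hkN : k ≤ N) :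
    passageWeight Y l y N ω = ENNReal.ofReal (Real.exp (-(2 * l * Y k ω))) := by
  rw [passageWeight, Finset.sum_eq_single_of_mem k (Finset.mem_range.2 (by omega)),
    indicator_of_mem hk]
  exact fun j _ hjk ↦ indicator_of_notMem (fun hj ↦ hjk (firstPassage_unique hj hk)) _

lemma passageWeight_eq_zero {l : ℝ} {N : ℕ} {ω : Ω} (h : ∀ k ≤ N, Y k ω ≤ y) :
    passageWeight Y l y N ω = 0 :=
  Finset.sum_eq_zero fun k hk ↦ indicator_of_notMem
    (fun hmem ↦ (h k (by simpa [Nat.lt_succ_iff] using hk)).not_gt hmem.1) _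

lemma passageWeight_le {l : ℝ} (hl : 0 ≤ l) (N : ℕ) (ω : Ω) :
    passageWeight Y l y N ω ≤ ENNReal.ofReal (Real.exp (-(2 * l * y))) := by
  by_cases h : ∃ k ≤ N, y < Y k ω
  · obtain ⟨k, hkN, hk⟩ := h
    obtain ⟨j, hjk, hj⟩ := exists_mem_firstPassage hk
    rw [passageWeight_eq hj (hjk.trans hkN)]
    have := hj.1.le
    gcongr
  · push Not at h
    rw [passageWeight_eq_zero h]
    exact zero_le

variable {X : ℝ≥0 → Ω → ℝ} {τ : ℕ → ℝ≥0}

lemma measurableSet_firstPassage_pastSigma (hτ : Monotone τ) (l y : ℝ) (k : ℕ) :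
    MeasurableSet[pastSigma X (τ k)] (firstPassage (fun k ↦ drifted X l (τ k)) y k) := by
  have hset : firstPassage (fun k ↦ drifted X l (τ k)) y k
      = drifted X l (τ k) ⁻¹' Ioi y ∩ ⋂ j ∈ Iio k, drifted X l (τ j) ⁻¹' Iic y := by
    ext ω
    simp [firstPassage]
  rw [hset]
  exact (measurable_drifted_pastSigma l le_rfl measurableSet_Ioi).inter <|
    MeasurableSet.biInter (to_countable _) fun j hj ↦
      measurable_drifted_pastSigma l (hτ (le_of_lt hj)) measurableSet_Iic

lemma measurable_indicator_firstPassage_pastSigma (hτ : Monotone τ) (l y : ℝ) (k : ℕ) :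
    Measurable[pastSigma X (τ k)] ((firstPassage (fun k ↦ drifted X l (τ k)) y k).indicator
      fun ω ↦ ENNReal.ofReal (Real.exp (-(2 * l * drifted X l (τ k) ω)))) :=
  ((measurable_drifted_pastSigma l le_rfl).const_mul _).neg.exp.ennreal_ofReal.indicator
    (measurableSet_firstPassage_pastSigma hτ l y k)

variable [MeasurableSpace Ω] {P : Measure Ω}

lemma measurable_drifted (hXm : ∀ s, Measurable (X s)) (l : ℝ) (s : ℝ≥0) :
    Measurable (drifted X l s) :=
  (hXm s).sub_const _

lemma measurable_expMart (hXm : ∀ s, Measurable (X s)) (l : ℝ) (s : ℝ≥0) :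
    Measurable (expMart X l s) :=
  ((measurable_drifted hXm l s).const_mul _).exp.ennreal_ofReal

lemma measurable_indicator_firstPassage (hXm : ∀ s, Measurable (X s)) (hτ : Monotone τ)
    (l y : ℝ) (k : ℕ) :
    Measurable ((firstPassage (fun k ↦ drifted X l (τ k)) y k).indicator
      fun ω ↦ ENNReal.ofReal (Real.exp (-(2 * l * drifted X l (τ k) ω)))) :=
  (measurable_indicator_firstPassage_pastSigma hτ l y k).mono (pastSigma_le hXm _) le_rfl

lemma measurable_passageWeight (hXm : ∀ s, Measurable (X s)) (hτ : Monotone τ) (l y : ℝ) (N : ℕ) :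
    Measurable (passageWeight (fun k ↦ drifted X l (τ k)) l y N) :=
  Finset.measurable_fun_sum _ fun k _ ↦ measurable_indicator_firstPassage hXm hτ l y k

lemma measurableSet_firstPassage (hXm : ∀ s, Measurable (X s)) (hτ : Monotone τ) (l y : ℝ) (k : ℕ) :
    MeasurableSet (firstPassage (fun k ↦ drifted X l (τ k)) y k) :=
  pastSigma_le hXm _ _ (measurableSet_firstPassage_pastSigma hτ l y k)

lemma lintegral_indicator_firstPassage_mul_expMart (hX : IsPreBrownianReal X P)
    (hXm : ∀ s, Measurable (X s)) (hτ : Monotone τ) (l y : ℝ) {k : ℕ} {T : ℝ≥0} (hT : τ k ≤ T) :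
    ∫⁻ ω, (firstPassage (fun k ↦ drifted X l (τ k)) y k).indicator
        (fun ω ↦ ENNReal.ofReal (Real.exp (-(2 * l * drifted X l (τ k) ω)))) ω
          * expMart X l T ω ∂P
      = P (firstPassage (fun k ↦ drifted X l (τ k)) y k) := by
  rw [lintegral_mul_expMart hX hXm l hT (measurable_indicator_firstPassage_pastSigma hτ l y k),
    ← lintegral_indicator_one (measurableSet_firstPassage hXm hτ l y k)]
  refine lintegral_congr fun ω ↦ ?_
  by_cases hω : ω ∈ firstPassage (fun k ↦ drifted X l (τ k)) y k
  · rw [indicator_of_mem hω, indicator_of_mem hω, expMart,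
      ← ENNReal.ofReal_mul (Real.exp_nonneg _), ← Real.exp_add]
    simp
  · rw [indicator_of_notMem hω, indicator_of_notMem hω, zero_mul]

lemma lintegral_passageWeight_mul_expMart (hX : IsPreBrownianReal X P)
    (hXm : ∀ s, Measurable (X s)) (hτ : Monotone τ) (l y : ℝ) {N : ℕ} {T : ℝ≥0} (hT : τ N ≤ T) :
    ∫⁻ ω, passageWeight (fun k ↦ drifted X l (τ k)) l y N ω * expMart X l T ω ∂P
      = P {ω | ∃ k ≤ N, y < drifted X l (τ k) ω} := by
  have hdisj : PairwiseDisjoint (Finset.range (N + 1) : Set ℕ)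
      (firstPassage (fun k ↦ drifted X l (τ k)) y) := fun j _ k _ hjk ↦
    disjoint_left.2 fun _ hj hk ↦ hjk (firstPassage_unique hj hk)
  simp_rw [passageWeight, Finset.sum_mul]
  rw [lintegral_finsetSum, ← biUnion_firstPassage,
    measure_biUnion_finset hdisj fun k _ ↦ measurableSet_firstPassage hXm hτ l y k]
  · exact Finset.sum_congr rfl fun k hk ↦
      lintegral_indicator_firstPassage_mul_expMart hX hXm hτ l y
        ((hτ (Nat.lt_succ_iff.1 (Finset.mem_range.1 hk))).trans hT)
  · exact fun k _ ↦
      (measurable_indicator_firstPassage hXm hτ l y k).mul (measurable_expMart hXm l T)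

end FirstPassage

section DyadicGrid

/-- The `k`-th point of the dyadic grid of mesh `2⁻ᵐ` in `ℝ≥0`. -/
def dyadic (m k : ℕ) : ℝ≥0 := k / 2 ^ m

lemma dyadic_mono (m : ℕ) : Monotone (dyadic m) := fun j k hjk ↦ by
  unfold dyadic
  gcongr

@[simp]
lemma dyadic_zero_right (m : ℕ) : dyadic m 0 = 0 := by simp [dyadic]

lemma dyadic_add (m j k : ℕ) : dyadic (m + j) (2 ^ j * k) = dyadic m k := by
  simp only [dyadic, Nat.cast_mul, Nat.cast_pow, Nat.cast_ofNat, pow_add]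
  rw [mul_comm ((2 : ℝ≥0) ^ m), mul_div_mul_left _ _ (by positivity)]

lemma dyadic_mul_two_pow (m n : ℕ) : dyadic m (n * 2 ^ m) = n := by
  simp [dyadic]

lemma dist_dyadic_succ (m k : ℕ) : dist (dyadic m (k + 1)) (dyadic m k) = (2 ^ m : ℝ)⁻¹ := by
  rw [NNReal.dist_eq]
  simp only [dyadic, NNReal.coe_div, NNReal.coe_natCast, NNReal.coe_pow, NNReal.coe_ofNat]
  rw [← sub_div, Nat.cast_add_one, add_sub_cancel_left, one_div, abs_of_pos (by positivity)]

lemma exists_dyadic_mem {U : Set ℝ≥0} (hU : IsOpen U) (hne : U.Nonempty) :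
    ∃ m k, dyadic m k ∈ U := by
  obtain ⟨s, hs⟩ := hne
  have htend : Tendsto (fun m ↦ dyadic m ⌊(s : ℝ) * 2 ^ m⌋₊) atTop (𝓝 s) := by
    rw [← NNReal.tendsto_coe]
    simpa [dyadic, Function.comp_def] using (tendsto_nat_floor_mul_div_atTop s.2).comp
      (tendsto_pow_atTop_atTop_of_one_lt (one_lt_two (α := ℝ)))
  obtain ⟨m, hm⟩ := (htend.eventually (hU.mem_nhds hs)).exists
  exact ⟨m, _, hm⟩

lemma eventually_exists_mem_firstPassage_dyadic {Ω : Type*} {Z : ℝ≥0 → Ω → ℝ} {ω : Ω}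
    (hZ : Continuous (Z · ω)) {y : ℝ} (hZ₀ : Z 0 ω ≤ y) {n m₀ k₀ : ℕ} (hk₀ : k₀ ≤ n * 2 ^ m₀)
    (hZk₀ : y < Z (dyadic m₀ k₀) ω) {ε : ℝ} (hε : 0 < ε) :
    ∀ᶠ m in atTop, ∃ k ≤ n * 2 ^ m,
      ω ∈ firstPassage (fun k ↦ Z (dyadic m k)) y k ∧ Z (dyadic m k) ω < y + ε := by
  obtain ⟨δ, hδ, hZδ⟩ := Metric.uniformContinuousOn_iff.1
    (isCompact_Icc.uniformContinuousOn_of_continuous (s := Icc 0 (n : ℝ≥0)) hZ.continuousOn) ε hε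
  have hmesh : ∀ᶠ m : ℕ in atTop, (2 ^ m : ℝ)⁻¹ < δ :=
    (tendsto_inv_atTop_zero.comp (tendsto_pow_atTop_atTop_of_one_lt one_lt_two)).eventually
      (gt_mem_nhds hδ)
  filter_upwards [hmesh, eventually_ge_atTop m₀] with m hm hm₀
  obtain ⟨j, rfl⟩ := Nat.exists_eq_add_of_le hm₀
  obtain ⟨k, hk, hkmem⟩ := exists_mem_firstPassage (Y := fun k ↦ Z (dyadic (m₀ + j) k))
    (k := 2 ^ j * k₀) (by rwa [dyadic_add])
  have hkn : k ≤ n * 2 ^ (m₀ + j) := hk.trans (by rw [pow_add]; nlinarith [Nat.zero_le (2 ^ j)])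
  refine ⟨k, hkn, hkmem, ?_⟩
  obtain _ | i := k
  · exact absurd hkmem.1 (by simpa using hZ₀)
  have hIcc {r : ℕ} (hr : r ≤ i + 1) : dyadic (m₀ + j) r ∈ Icc 0 (n : ℝ≥0) :=
    ⟨zero_le, dyadic_mul_two_pow (m₀ + j) n ▸ dyadic_mono _ (hr.trans hkn)⟩
  have hjump := hZδ _ (hIcc le_rfl) _ (hIcc i.le_succ) (by rwa [dist_dyadic_succ])
  have hprev : Z (dyadic (m₀ + j) i) ω ≤ y := hkmem.2 i i.lt_succ_self
  linarith [(abs_lt.1 (Real.dist_eq _ _ ▸ hjump)).2]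

end DyadicGrid

section LineCrossing

variable {Ω : Type*} {X : ℝ≥0 → Ω → ℝ} {l y : ℝ}

/-- The event that `X` exceeds the line with slope `l` and intercept `y` at a point of the dyadic
grid of mesh `2⁻ᵐ` in `[0, n]`. -/
def dyadicCrossing (X : ℝ≥0 → Ω → ℝ) (l y : ℝ) (n m : ℕ) : Set Ω :=
  {ω | ∃ k ≤ n * 2 ^ m, y < drifted X l (dyadic m k) ω}

lemma dyadicCrossing_mono (n : ℕ) : Monotone (dyadicCrossing X l y n) := by
  refine monotone_nat_of_le_succ fun m ω ⟨k, hkn, hk⟩ ↦ ⟨2 ^ 1 * k, ?_, by rwa [dyadic_add]⟩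
  rw [pow_one, pow_succ, ← mul_assoc]
  omega

lemma exists_mem_dyadicCrossing_iff {ω : Ω} (hω : Continuous (X · ω)) :
    (∃ n m, ω ∈ dyadicCrossing X l y n m) ↔ ∃ s, y < drifted X l s ω := by
  constructor
  · rintro ⟨-, m, k, -, hk⟩
    exact ⟨_, hk⟩
  · intro hs
    have hopen : IsOpen {s | y < drifted X l s ω} :=
      isOpen_lt continuous_const (by unfold drifted; fun_prop)
    obtain ⟨m, k, hk⟩ := exists_dyadic_mem hopen hs
    exact ⟨k, m, k, Nat.le_mul_of_pos_right k (by positivity), hk⟩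

lemma tendsto_passageWeight_dyadic {ω : Ω} (hω : Continuous (X · ω)) (hω₀ : X 0 ω ≤ y) (n : ℕ) :
    Tendsto (fun m ↦ passageWeight (fun k ↦ drifted X l (dyadic m k)) l y (n * 2 ^ m) ω) atTop
      (𝓝 ((⋃ m, dyadicCrossing X l y n m).indicator
        (fun _ ↦ ENNReal.ofReal (Real.exp (-(2 * l * y)))) ω)) := by
  by_cases hA : ω ∈ ⋃ m, dyadicCrossing X l y n m
  · obtain ⟨m₀, k₀, hk₀, hXk₀⟩ := mem_iUnion.1 hA
    rw [indicator_of_mem hA]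
    have hcont : Continuous fun x : ℝ ↦ ENNReal.ofReal (Real.exp (-(2 * l * x))) :=
      ENNReal.continuous_ofReal.comp (by fun_prop)
    refine tendsto_def.2 fun U hU ↦ ?_
    obtain ⟨ε, hε, hball⟩ := Metric.mem_nhds_iff.1 (hcont.continuousAt.preimage_mem_nhds hU)
    filter_upwards [eventually_exists_mem_firstPassage_dyadic (Z := drifted X l)
      (by unfold drifted; fun_prop) (by simpa [drifted] using hω₀) hk₀ hXk₀ hε]
      with m ⟨k, hkn, hk, hover⟩
    rw [mem_preimage, passageWeight_eq hk hkn]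
    refine hball ?_
    rw [Metric.mem_ball, Real.dist_eq, abs_lt]
    constructor <;> linarith [hk.1]
  · rw [indicator_of_notMem hA]
    refine tendsto_const_nhds.congr fun m ↦ (passageWeight_eq_zero fun k hk ↦ ?_).symm
    exact not_lt.1 fun h ↦ hA (mem_iUnion.2 ⟨m, k, hk, h⟩)

variable [MeasurableSpace Ω] {P : Measure Ω}

lemma measurableSet_dyadicCrossing (hXm : ∀ s, Measurable (X s)) (l y : ℝ) (n m : ℕ) :
    MeasurableSet (dyadicCrossing X l y n m) := by
  have hset : dyadicCrossing X l y n m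
      = ⋃ k ∈ Iic (n * 2 ^ m), drifted X l (dyadic m k) ⁻¹' Ioi y := by
    ext ω
    simp [dyadicCrossing]
  rw [hset]
  exact MeasurableSet.biUnion (to_countable _) fun k _ ↦
    measurable_drifted hXm l _ measurableSet_Ioi

lemma lintegral_expMart (hX : IsPreBrownianReal X P) (hXm : ∀ s, Measurable (X s)) (l : ℝ)
    (s : ℝ≥0) : ∫⁻ ω, expMart X l s ω ∂P = 1 := by
  simpa [lintegral_expMart_zero hX] using
    lintegral_mul_expMart hX hXm l (zero_le (a := s)) (g := fun _ ↦ 1)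
      (@measurable_const _ _ _ (pastSigma X 0) 1)

lemma measure_iUnion_dyadicCrossing (hX : IsBrownianReal X P) (hXm : ∀ s, Measurable (X s))
    (hl : 0 ≤ l) (hy : 0 ≤ y) (n : ℕ) :
    P (⋃ m, dyadicCrossing X l y n m) = ENNReal.ofReal (Real.exp (-(2 * l * y))) *
      ∫⁻ ω in ⋃ m, dyadicCrossing X l y n m, expMart X l n ω ∂P := by
  set A := ⋃ m, dyadicCrossing X l y n m
  set c := ENNReal.ofReal (Real.exp (-(2 * l * y)))
  have hAm : MeasurableSet A := MeasurableSet.iUnion (measurableSet_dyadicCrossing hXm l y n)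
  have hMm : Measurable (expMart X l n) := measurable_expMart hXm l n
  have hgrid (m : ℕ) : ∫⁻ ω, passageWeight (fun k ↦ drifted X l (dyadic m k)) l y (n * 2 ^ m) ω
      * expMart X l n ω ∂P = P (dyadicCrossing X l y n m) :=
    lintegral_passageWeight_mul_expMart hX.toIsPreBrownianReal hXm (dyadic_mono m) l y
      (dyadic_mul_two_pow m n).le
  have hlim : Tendsto (fun m ↦ P (dyadicCrossing X l y n m)) atTop
      (𝓝 (∫⁻ ω, A.indicator (fun _ ↦ c) ω * expMart X l n ω ∂P)) := by
    simp_rw [← hgrid]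
    refine tendsto_lintegral_of_dominated_convergence (fun ω ↦ c * expMart X l n ω)
      (fun m ↦ (measurable_passageWeight hXm (dyadic_mono m) l y _).mul hMm)
      (fun m ↦ ae_of_all _ fun ω ↦ mul_le_mul' (passageWeight_le hl _ ω) le_rfl) ?_ ?_
    · rw [lintegral_const_mul _ hMm, lintegral_expMart hX.toIsPreBrownianReal hXm, mul_one]
      exact ENNReal.ofReal_ne_top
    · filter_upwards [hX.cont, hX.eval_zero_ae_eq_zero] with ω hω hω₀
      exact ENNReal.Tendsto.mul_const
        (tendsto_passageWeight_dyadic hω (by rwa [hω₀]) n) (.inr ENNReal.ofReal_ne_top)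
  rw [tendsto_nhds_unique (tendsto_measure_iUnion_atTop (dyadicCrossing_mono n)) hlim,
    ← lintegral_const_mul _ hMm, ← lintegral_indicator hAm]
  refine lintegral_congr fun ω ↦ ?_
  by_cases hω : ω ∈ A <;> simp [hω]

lemma setLIntegral_compl_expMart_le (hX : IsPreBrownianReal X P) (hXm : ∀ s, Measurable (X s))
    (hl : 0 ≤ l) (n : ℕ) :
    ∫⁻ ω in (⋃ m, dyadicCrossing X l y n m)ᶜ, expMart X l n ω ∂P
      ≤ ENNReal.ofReal (Real.exp (l * y - l ^ 2 * n / 2)) := by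
  have hle : ∀ ω ∈ (⋃ m, dyadicCrossing X l y n m)ᶜ, expMart X l n ω
      ≤ ENNReal.ofReal (Real.exp (l * y - l ^ 2 * n / 2)) * expMart X (l / 2) n ω := by
    intro ω hω
    have hn : drifted X l n ω ≤ y := not_lt.1 fun h ↦
      hω (mem_iUnion.2 ⟨0, n, by simp, by simpa [dyadic] using h⟩)
    rw [expMart, expMart, ← ENNReal.ofReal_mul (Real.exp_nonneg _), ← Real.exp_add]
    gcongr
    simp only [drifted, NNReal.coe_natCast] at hn ⊢
    nlinarith [mul_le_mul_of_nonneg_left hn hl]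
  calc ∫⁻ ω in (⋃ m, dyadicCrossing X l y n m)ᶜ, expMart X l n ω ∂P
      ≤ ∫⁻ ω in (⋃ m, dyadicCrossing X l y n m)ᶜ,
          ENNReal.ofReal (Real.exp (l * y - l ^ 2 * n / 2)) * expMart X (l / 2) n ω ∂P :=
        setLIntegral_mono ((measurable_expMart hXm _ _).const_mul _) hle
    _ ≤ ∫⁻ ω, ENNReal.ofReal (Real.exp (l * y - l ^ 2 * n / 2)) * expMart X (l / 2) n ω ∂P :=
        setLIntegral_le_lintegral _ _
    _ = ENNReal.ofReal (Real.exp (l * y - l ^ 2 * n / 2)) := by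
        rw [lintegral_const_mul _ (measurable_expMart hXm _ _), lintegral_expMart hX hXm, mul_one]

lemma tendsto_setLIntegral_expMart (hX : IsPreBrownianReal X P) (hXm : ∀ s, Measurable (X s))
    (hl : 0 < l) (y : ℝ) :
    Tendsto (fun n : ℕ ↦ ∫⁻ ω in ⋃ m, dyadicCrossing X l y n m, expMart X l n ω ∂P) atTop
      (𝓝 1) := by
  have hcompl : Tendsto (fun n : ℕ ↦ ∫⁻ ω in (⋃ m, dyadicCrossing X l y n m)ᶜ,
      expMart X l n ω ∂P) atTop (𝓝 0) := by
    have hexponent : Tendsto (fun n : ℕ ↦ l * y - l ^ 2 * n / 2) atTop atBot := by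
      have := (tendsto_natCast_atTop_atTop (R := ℝ)).const_mul_atTop (r := l ^ 2 / 2)
        (by positivity)
      refine (tendsto_const_nhds (x := l * y)).add_atBot (tendsto_neg_atTop_atBot.comp this)
        |>.congr fun n ↦ ?_
      simp only [Function.comp_apply]
      ring
    refine tendsto_of_tendsto_of_tendsto_of_le_of_le tendsto_const_nhds ?_ (fun _ ↦ zero_le)
      fun n ↦ setLIntegral_compl_expMart_le hX hXm hl.le n
    simpa [Function.comp_def] using
      ENNReal.tendsto_ofReal (Real.tendsto_exp_atBot.comp hexponent)
  have hsub (n : ℕ) : ∫⁻ ω in ⋃ m, dyadicCrossing X l y n m, expMart X l n ω ∂P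
      = 1 - ∫⁻ ω in (⋃ m, dyadicCrossing X l y n m)ᶜ, expMart X l n ω ∂P := by
    refine ENNReal.eq_sub_of_add_eq (ne_top_of_le_ne_top ENNReal.ofReal_ne_top
      (setLIntegral_compl_expMart_le hX hXm hl.le n)) ?_
    rw [← lintegral_expMart hX hXm l n, lintegral_add_compl _
      (MeasurableSet.iUnion (measurableSet_dyadicCrossing hXm l y n))]
  simp_rw [hsub]
  simpa using ENNReal.Tendsto.sub tendsto_const_nhds hcompl (.inl ENNReal.one_ne_top)

theorem measure_exists_line_lt (hX : IsBrownianReal X P) (hXm : ∀ s, Measurable (X s))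
    (hl : 0 < l) (hy : 0 ≤ y) :
    P {ω | ∃ s : ℝ≥0, y + l * s < X s ω} = ENNReal.ofReal (Real.exp (-(2 * l * y))) := by
  have hae : {ω | ∃ s : ℝ≥0, y + l * s < X s ω} =ᵐ[P] ⋃ n, ⋃ m, dyadicCrossing X l y n m := by
    refine eventuallyEq_set.2 ?_
    filter_upwards [hX.cont] with ω hω
    simp only [mem_iUnion, exists_mem_dyadicCrossing_iff hω, drifted, lt_sub_iff_add_lt]
  have hmono : Monotone fun n ↦ ⋃ m, dyadicCrossing X l y n m := fun n n' hn ↦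
    iUnion_mono fun m ω ⟨k, hkn, hk⟩ ↦ ⟨k, hkn.trans (Nat.mul_le_mul_right _ hn), hk⟩
  rw [measure_congr hae]
  refine tendsto_nhds_unique (tendsto_measure_iUnion_atTop hmono) ?_
  simpa [Function.comp_def, measure_iUnion_dyadicCrossing hX hXm hl.le hy] using
    ENNReal.Tendsto.const_mul (tendsto_setLIntegral_expMart hX.toIsPreBrownianReal hXm hl y)
      (.inr ENNReal.ofReal_ne_top)

end LineCrossing

lemma measure_eq_of_Iic_pos {μ ν : Measure ℝ} [IsFiniteMeasure μ]
    (h : ∀ x, 0 < x → μ (Iic x) = ν (Iic x)) (hν : ν (Iic 0) = 0) : μ = ν := by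
  have hinter : ⋂ r > (0 : ℝ), Iic r = Iic 0 := by
    ext x
    simp [forall_gt_imp_ge_iff_le_of_dense]
  have hlim : Tendsto (ν ∘ Iic) (𝓝[>] 0) (𝓝 0) := by
    rw [← hν, ← hinter]
    refine tendsto_measure_biInter_gt (fun r _ ↦ nullMeasurableSet_Iic)
      (fun r s _ hrs ↦ Iic_subset_Iic.2 hrs) ⟨1, one_pos, ?_⟩
    rw [← h 1 one_pos]
    exact measure_ne_top μ _
  have hμ : μ (Iic 0) = 0 := nonpos_iff_eq_zero.1 <| ge_of_tendsto hlim <| by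
    filter_upwards [self_mem_nhdsWithin] with r hr
    exact (measure_mono (Iic_subset_Iic.2 (le_of_lt hr))).trans (h r hr).le
  refine Measure.ext_of_Iic μ ν fun x ↦ ?_
  obtain hx | hx := le_or_gt x 0
  · rw [measure_mono_null (Iic_subset_Iic.2 hx) hμ, measure_mono_null (Iic_subset_Iic.2 hx) hν]
  · exact h x hx

section DominatingSlope

/-- The smallest slope of a line with intercept `y` dominating the path `f`, computed along the
dyadic grid so that it is measurable in `f`. The supremum has the junk value `0` if no line with
intercept `y` dominates `f`. -/
def dominatingSlope (f : ℝ≥0 → ℝ) (y : ℝ) : ℝ :=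
  ⨆ p : ℕ × ℕ, (f (dyadic p.1 (p.2 + 1)) - y) / dyadic p.1 (p.2 + 1)

lemma dyadic_succ_pos (m k : ℕ) : 0 < dyadic m (k + 1) := by
  unfold dyadic
  positivity

lemma dominatingSlope_le_iff {f : ℝ≥0 → ℝ} {y l : ℝ} (hf : Continuous f) (hf₀ : f 0 ≤ y)
    (hdom : ∃ a : ℝ, ∀ s : ℝ≥0, f s ≤ y + a * s) :
    dominatingSlope f y ≤ l ↔ ∀ s : ℝ≥0, f s ≤ y + l * s := by
  have hquot (a : ℝ) (m k : ℕ) : (f (dyadic m (k + 1)) - y) / dyadic m (k + 1) ≤ a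
      ↔ f (dyadic m (k + 1)) ≤ y + a * dyadic m (k + 1) := by
    rw [div_le_iff₀ (mod_cast dyadic_succ_pos m k), sub_le_iff_le_add']
  obtain ⟨a, ha⟩ := hdom
  have hbdd : BddAbove (range fun p : ℕ × ℕ ↦
      (f (dyadic p.1 (p.2 + 1)) - y) / dyadic p.1 (p.2 + 1)) :=
    ⟨a, forall_mem_range.2 fun p ↦ (hquot a p.1 p.2).2 (ha _)⟩
  rw [dominatingSlope, ciSup_le_iff hbdd, Prod.forall]
  simp only [hquot]
  refine ⟨fun h ↦ ?_, fun h m k ↦ h _⟩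
  by_contra! hne
  obtain ⟨m, k, hk⟩ := exists_dyadic_mem
    (isOpen_lt (f := fun s : ℝ≥0 ↦ y + l * s) (by fun_prop) hf) hne
  obtain _ | k := k
  · simp [hf₀.not_gt] at hk
  · exact (h m k).not_gt hk

variable {Ω : Type*} [MeasurableSpace Ω] {P : Measure Ω} {X : ℝ≥0 → Ω → ℝ} {y : ℝ}

lemma measurable_dominatingSlope (hXm : ∀ s, Measurable (X s)) (y : ℝ) :
    Measurable fun ω ↦ dominatingSlope (X · ω) y :=
  Measurable.iSup fun _ ↦ ((hXm _).sub_const _).div_const _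

lemma ae_exists_forall_le_line (hX : IsBrownianReal X P) (hXm : ∀ s, Measurable (X s))
    (hy : 0 < y) : ∀ᵐ ω ∂P, ∃ l : ℝ, ∀ s : ℝ≥0, X s ω ≤ y + l * s := by
  have hbound (n : ℕ) : P {ω | ¬ ∃ l : ℝ, ∀ s : ℝ≥0, X s ω ≤ y + l * s}
      ≤ ENNReal.ofReal (Real.exp (-(2 * (n + 1 : ℕ) * y))) := by
    rw [← measure_exists_line_lt hX hXm (by positivity) hy.le]
    refine measure_mono fun ω hω ↦ ?_
    simp only [mem_ofPred_eq, not_exists, not_forall, not_le] at hω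
    exact hω _
  have hlim : Tendsto (fun n : ℕ ↦ Real.exp (-(2 * (n + 1 : ℕ) * y))) atTop (𝓝 0) := by
    refine Real.tendsto_exp_neg_atTop_nhds_zero.comp (Tendsto.atTop_mul_const hy
      (Tendsto.const_mul_atTop two_pos ?_))
    exact tendsto_natCast_atTop_atTop.comp (tendsto_add_atTop_nat 1)
  rw [ae_iff, ← nonpos_iff_eq_zero]
  exact ge_of_tendsto' (by simpa using ENNReal.tendsto_ofReal hlim) hbound

lemma expMeasure_Iic {r : ℝ} (hr : 0 < r) (x : ℝ) :
    expMeasure r (Iic x) = ENNReal.ofReal (1 - Real.exp (-(r * max x 0))) := by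
  have := isProbabilityMeasure_expMeasure hr
  rw [← ofReal_cdf, cdf_expMeasure_eq hr]
  split_ifs with hx
  · rw [max_eq_left hx]
  · rw [max_eq_right (le_of_not_ge hx)]; simp

theorem map_dominatingSlope (hX : IsBrownianReal X P) (hXm : ∀ s, Measurable (X s)) (hy : 0 < y) :
    P.map (fun ω ↦ dominatingSlope (X · ω) y) = expMeasure (2 * y) := by
  have := hX.isGaussianProcess.isProbabilityMeasure
  have hm := measurable_dominatingSlope hXm y
  have := Measure.isProbabilityMeasure_map (μ := P) hm.aemeasurable
  refine measure_eq_of_Iic_pos (fun l hl ↦ ?_) (by simp [expMeasure_Iic, hy])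
  have hcross : P.map (fun ω ↦ dominatingSlope (X · ω) y) (Ioi l)
      = ENNReal.ofReal (Real.exp (-(2 * l * y))) := by
    rw [Measure.map_apply hm measurableSet_Ioi, ← measure_exists_line_lt hX hXm hl hy.le]
    refine measure_congr (eventuallyEq_set.2 ?_)
    filter_upwards [hX.cont, hX.eval_zero_ae_eq_zero, ae_exists_forall_le_line hX hXm hy]
      with ω hω hω₀ hdom
    rw [mem_preimage, mem_Ioi, ← not_le,
      dominatingSlope_le_iff hω (by rw [hω₀]; exact hy.le) hdom]
    simp
  rw [← compl_Ioi, prob_compl_eq_one_sub measurableSet_Ioi, hcross, compl_Ioi,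
    expMeasure_Iic (by positivity), max_eq_left hl.le, ENNReal.ofReal_sub _ (Real.exp_nonneg _),
    ENNReal.ofReal_one, mul_right_comm]

end DominatingSlope

section FutureAndPast

/-- The increments of the path `f` after time `t`. -/
def futurePath (t : ℝ≥0) (f : ℝ≥0 → ℝ) (s : ℝ≥0) : ℝ := f (t + s) - f t

/-- The path `f` on `(0, t]` seen from time `t` after time inversion: the rescaled increments of
`u ↦ u * f (1 / u)` after time `1 / t`. -/
def pastPath (t : ℝ≥0) (f : ℝ≥0 → ℝ) (s : ℝ≥0) : ℝ := (1 + s / t) * f (t ^ 2 / (t + s)) - f t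

variable {t : ℝ≥0} {f : ℝ≥0 → ℝ}

lemma measurable_futurePath (t : ℝ≥0) : Measurable (futurePath t) := by
  unfold futurePath
  fun_prop

lemma measurable_pastPath (t : ℝ≥0) : Measurable (pastPath t) := by
  unfold pastPath
  fun_prop

lemma continuous_futurePath (t : ℝ≥0) (hf : Continuous f) : Continuous (futurePath t f) := by
  unfold futurePath
  fun_prop

lemma continuous_pastPath (ht : t ≠ 0) (hf : Continuous f) : Continuous (pastPath t f) := by
  unfold pastPath
  have hdiv : Continuous fun s : ℝ≥0 ↦ t ^ 2 / (t + s) :=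
    continuous_const.div₀ (by fun_prop) fun s ↦ (add_pos_of_pos_of_nonneg ht.bot_lt zero_le).ne'
  fun_prop

lemma pastPath_eq_inversion (ht : t ≠ 0) (s : ℝ≥0) :
    pastPath t f s = t * (((1 / t + 1 / t ^ 2 * s : ℝ≥0) : ℝ) * f (1 / (1 / t + 1 / t ^ 2 * s))
      - ((1 / t : ℝ≥0) : ℝ) * f (1 / (1 / t))) := by
  have htime : 1 / (1 / t + 1 / t ^ 2 * s) = t ^ 2 / (t + s) := by
    field_simp
  have ht' : (t : ℝ) ≠ 0 := mod_cast ht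
  rw [htime, one_div_one_div, pastPath]
  push_cast
  field_simp

variable {Ω : Type*} [MeasurableSpace Ω] {P : Measure Ω} {W : ℝ≥0 → Ω → ℝ}

lemma isBrownianReal_pastPath (hW : IsBrownianReal W P) (ht : t ≠ 0) :
    IsBrownianReal (fun s ω ↦ pastPath t (W · ω) s) P where
  toIsPreBrownianReal := by
    refine ((hW.inv.shift (1 / t)).smul (c := 1 / t ^ 2) (by positivity)).congr fun s ↦
      ae_of_all _ fun ω ↦ ?_
    simp [pastPath_eq_inversion ht]
  cont := by
    filter_upwards [hW.cont] with ω hω using continuous_pastPath ht hω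

lemma indepFun_pastPath (hW : IsPreBrownianReal W P) (ht : t ≠ 0) :
    IndepFun (fun ω ↦ pastPath t (W · ω)) (fun ω ↦ (futurePath t (W · ω), W t ω)) P := by
  have htime (s : ℝ≥0) : 1 / (t + s) ≤ 1 / t := by
    have := ht.bot_lt
    gcongr
    exact le_self_add
  let past (g : ℝ≥0 → ℝ) (s : ℝ≥0) : ℝ := t * g (1 / t ^ 2 * s)
  let present (h : Iic (1 / t) → ℝ) : ℝ := t * h ⟨1 / t, self_mem_Iic⟩
  let future (h : Iic (1 / t) → ℝ) (s : ℝ≥0) : ℝ :=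
    (t + s) * h ⟨1 / (t + s), htime s⟩ - present h
  have hindep := (hW.inv.indepFun_shift (1 / t)).comp (φ := past)
    (ψ := fun h ↦ (future h, present h)) (by fun_prop) (by fun_prop)
  have ht' : (t : ℝ) ≠ 0 := mod_cast ht
  convert hindep using 1
  · ext ω s
    simp [past, pastPath_eq_inversion ht]
  · ext ω s
    · have hts : ((t : ℝ) + s) ≠ 0 := mod_cast (add_pos_of_pos_of_nonneg ht.bot_lt zero_le).ne'
      simp [future, present, futurePath, ht', hts]
    · simp [present, ht']

lemma indepFun_futurePath (hW : IsPreBrownianReal W P) (t : ℝ≥0) :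
    IndepFun (fun ω ↦ futurePath t (W · ω)) (W t) P :=
  (hW.indepFun_shift t).comp measurable_id (measurable_pi_apply (⟨t, self_mem_Iic⟩ : Iic t))

lemma measurable_dominatingSlope_path (y : ℝ) :
    Measurable fun f : ℝ≥0 → ℝ ↦ dominatingSlope f y :=
  measurable_dominatingSlope (X := fun s (f : ℝ≥0 → ℝ) ↦ f s) measurable_pi_apply y

theorem map_dominatingSlope_past_future (hW : IsBrownianReal W P) (hWm : ∀ s, Measurable (W s))
    (ht : t ≠ 0) {y : ℝ} (hy : 0 < y) :
    P.map (fun ω ↦ (dominatingSlope (pastPath t (W · ω)) y,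
        dominatingSlope (futurePath t (W · ω)) y, W t ω))
      = (expMeasure (2 * y)).prod ((expMeasure (2 * y)).prod (gaussianReal 0 t)) := by
  have := hW.isGaussianProcess.isProbabilityMeasure
  have hWm' : Measurable fun ω ↦ (W · ω) := measurable_pi_lambda _ hWm
  have hslope := measurable_dominatingSlope_path y
  have hpast : Measurable fun ω ↦ pastPath t (W · ω) := (measurable_pastPath t).comp hWm'
  have hfuture : Measurable fun ω ↦ futurePath t (W · ω) := (measurable_futurePath t).comp hWm'
  have hindep₁ := (indepFun_iff_map_prod_eq_prod_map_map (hslope.comp hpast).aemeasurable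
    ((hslope.comp hfuture).prodMk (hWm t)).aemeasurable).1
      ((indepFun_pastPath hW.toIsPreBrownianReal ht).comp hslope (hslope.prodMap measurable_id))
  have hindep₂ := (indepFun_iff_map_prod_eq_prod_map_map (hslope.comp hfuture).aemeasurable
    (hWm t).aemeasurable).1
      ((indepFun_futurePath hW.toIsPreBrownianReal t).comp hslope measurable_id)
  have hlaw_past := map_dominatingSlope (isBrownianReal_pastPath hW ht)
    (fun s ↦ (measurable_pi_apply s).comp hpast) hy
  have hlaw_future := map_dominatingSlope (hW.shift t)
    (fun s ↦ (measurable_pi_apply s).comp hfuture) hy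
  have hlaw_eval := (hW.hasLaw_eval t).map_eq
  exact hindep₁.trans (congrArg₂ _ hlaw_past (hindep₂.trans (congrArg₂ _ hlaw_future hlaw_eval)))

end FutureAndPast

section ConcaveMajorant

lemma exists_forall_le_line_of_concaveOn {S : Set ℝ} {g : ℝ → ℝ} {x : ℝ} (hg : ConcaveOn ℝ S g)
    (hx : x ∈ interior S) : ∃ l, ∀ u ∈ S, g u ≤ g x + l * (u - x) := by
  refine ⟨-derivWithin (-g) (Ioi x) x, fun u hu ↦ ?_⟩
  obtain hux | rfl | hxu := lt_trichotomy u x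
  · have := (hg.neg.slope_le_leftDeriv_of_mem_interior hu hx hux).trans
      (hg.neg.leftDeriv_le_rightDeriv_of_mem_interior hx)
    rw [slope_def_field, div_le_iff₀ (sub_pos.2 hux)] at this
    simp only [Pi.neg_apply] at this
    linarith
  · simp
  · have := hg.neg.rightDeriv_le_slope_of_mem_interior hx hu hxu
    rw [slope_def_field, le_div_iff₀ (sub_pos.2 hxu)] at this
    simp only [Pi.neg_apply] at this
    linarith

variable {f : ℝ → ℝ}

lemma concaveMajorant_le {c : ℝ → ℝ} {u : ℝ} (hc : ConcaveOn ℝ (Ici 0) c)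
    (hfc : ∀ v, 0 ≤ v → f v ≤ c v) (hu : 0 ≤ u) : concaveMajorant f u ≤ c u :=
  csInf_le ⟨f u, by rintro _ ⟨d, -, hfd, rfl⟩; exact hfd u hu⟩ ⟨c, hc, hfc, rfl⟩

lemma le_concaveMajorant {a u : ℝ}
    (hf : ∃ c : ℝ → ℝ, ConcaveOn ℝ (Ici 0) c ∧ ∀ v, 0 ≤ v → f v ≤ c v)
    (ha : ∀ c : ℝ → ℝ, ConcaveOn ℝ (Ici 0) c → (∀ v, 0 ≤ v → f v ≤ c v) → a ≤ c u) :
    a ≤ concaveMajorant f u := by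
  obtain ⟨c, hc, hfc⟩ := hf
  refine le_csInf ⟨_, c, hc, hfc, rfl⟩ ?_
  rintro _ ⟨d, hd, hfd, rfl⟩
  exact ha d hd hfd

lemma concaveOn_concaveMajorant
    (hf : ∃ c : ℝ → ℝ, ConcaveOn ℝ (Ici 0) c ∧ ∀ v, 0 ≤ v → f v ≤ c v) :
    ConcaveOn ℝ (Ici 0) (concaveMajorant f) := by
  refine ⟨convex_Ici 0, fun u hu v hv p q hp hq hpq ↦ le_concaveMajorant hf fun c hc hfc ↦ ?_⟩
  calc p • concaveMajorant f u + q • concaveMajorant f v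
      ≤ p • c u + q • c v := by
        gcongr <;> exact concaveMajorant_le hc hfc ‹_›
    _ ≤ c (p • u + q • v) := hc.2 hu hv hp hq hpq

lemma concaveOn_line (a l t : ℝ) : ConcaveOn ℝ (Ici 0) fun u ↦ a + l * (u - t) :=
  ⟨convex_Ici 0, fun u _ v _ p q _ _ hpq ↦ by
    obtain rfl := eq_sub_of_add_eq hpq
    simp only [smul_eq_mul]
    apply le_of_eq
    ring⟩

lemma concaveMajorant_le_iff {t a : ℝ} (ht : 0 < t)
    (hf : ∃ c : ℝ → ℝ, ConcaveOn ℝ (Ici 0) c ∧ ∀ v, 0 ≤ v → f v ≤ c v) :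
    concaveMajorant f t ≤ a ↔ ∃ l : ℝ, ∀ u, 0 ≤ u → f u ≤ a + l * (u - t) := by
  refine ⟨fun h ↦ ?_, fun ⟨l, hl⟩ ↦ ?_⟩
  · obtain ⟨l, hl⟩ := exists_forall_le_line_of_concaveOn (concaveOn_concaveMajorant hf)
      (x := t) (by simpa using ht)
    refine ⟨l, fun u hu ↦ ?_⟩
    calc f u ≤ concaveMajorant f u := le_concaveMajorant hf fun c _ hfc ↦ hfc u hu
      _ ≤ concaveMajorant f t + l * (u - t) := hl u hu
      _ ≤ a + l * (u - t) := by gcongr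
  · simpa using concaveMajorant_le (concaveOn_line a l t) hl ht.le

variable {t : ℝ≥0} {g : ℝ≥0 → ℝ} {y l : ℝ}

lemma futurePath_le_line_iff (s : ℝ≥0) :
    futurePath t g s ≤ y + l * s ↔ g (t + s) ≤ g t + y + l * ((t + s : ℝ≥0) - t) := by
  rw [futurePath, NNReal.coe_add, add_sub_cancel_left, sub_le_iff_le_add', add_assoc]

lemma pastPath_le_line_iff (ht : t ≠ 0) (s : ℝ≥0) :
    pastPath t g s ≤ y + ((g t + y) / t - l) * s
      ↔ g (t ^ 2 / (t + s)) ≤ g t + y + l * ((t ^ 2 / (t + s) : ℝ≥0) - t) := by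
  have : (0 : ℝ) < t := mod_cast ht.bot_lt
  have hline : y + ((g t + y) / t - l) * s
      = (1 + s / t) * (g t + y + l * ((t ^ 2 / (t + s) : ℝ≥0) - t)) - g t := by
    push_cast
    field_simp
    ring
  rw [hline, pastPath, sub_le_sub_iff_right, mul_le_mul_iff_right₀ (by positivity)]

lemma forall_le_line_iff_future_past (hg : Continuous g) (ht : t ≠ 0) :
    (∀ u : ℝ≥0, g u ≤ g t + y + l * (u - t)) ↔ (∀ s : ℝ≥0, futurePath t g s ≤ y + l * s) ∧
      ∀ s : ℝ≥0, pastPath t g s ≤ y + ((g t + y) / t - l) * s := by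
  simp only [futurePath_le_line_iff, pastPath_le_line_iff ht]
  refine ⟨fun h ↦ ⟨fun s ↦ h _, fun s ↦ h _⟩, fun ⟨hfuture, hpast⟩ ↦ ?_⟩
  have hpos : Ioi 0 ⊆ {u : ℝ≥0 | g u ≤ g t + y + l * (u - t)} := by
    intro u hu
    obtain htu | hut := le_total t u
    · simpa only [mem_ofPred_eq, add_tsub_cancel_of_le htu] using hfuture (u - t)
    · have hu₀ : u ≠ 0 := hu.ne'
      have htime : t ≤ t ^ 2 / u := by
        rw [le_div_iff₀ hu, sq]
        gcongr
      have hinv : t ^ 2 / (t ^ 2 / u) = u := by field_simp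
      have h := hpast (t ^ 2 / u - t)
      rwa [add_tsub_cancel_of_le htime, hinv] at h
  have hclosed : IsClosed {u : ℝ≥0 | g u ≤ g t + y + l * (u - t)} :=
    isClosed_le hg (by fun_prop)
  exact fun u ↦ closure_minimal hpos hclosed (by simp)

lemma exists_concaveOn_ge_of_future_past (hf : Continuous fun s : ℝ≥0 ↦ f s) (ht : t ≠ 0)
    (hfuture : ∃ l : ℝ, ∀ s : ℝ≥0, futurePath t (fun s ↦ f s) s ≤ y + l * s)
    (hpast : ∃ l : ℝ, ∀ s : ℝ≥0, pastPath t (fun s ↦ f s) s ≤ y + l * s) :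
    ∃ c : ℝ → ℝ, ConcaveOn ℝ (Ici 0) c ∧ ∀ v, 0 ≤ v → f v ≤ c v := by
  obtain ⟨l, hl⟩ := hfuture
  obtain ⟨k, hk⟩ := hpast
  have ht' : (0 : ℝ) < t := mod_cast ht.bot_lt
  obtain ⟨z, hyz, hkz⟩ : ∃ z, y ≤ z ∧ k ≤ (f t + z) / t - l := by
    refine ⟨max y ((l + k) * t - f t), le_max_left _ _, ?_⟩
    rw [le_sub_iff_add_le, le_div_iff₀ ht']
    linarith [le_max_right y ((l + k) * t - f t)]
  have hdom := (forall_le_line_iff_future_past (y := z) (l := l) hf ht).2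
    ⟨fun s ↦ (hl s).trans (by gcongr), fun s ↦ (hk s).trans (by gcongr)⟩
  exact ⟨_, concaveOn_line _ l t, fun v hv ↦ hdom ⟨v, hv⟩⟩

theorem concaveMajorant_le_add_iff (hf : Continuous fun s : ℝ≥0 ↦ f s) (ht : t ≠ 0) (hy : 0 ≤ y)
    (hfuture : ∃ l : ℝ, ∀ s : ℝ≥0, futurePath t (fun s ↦ f s) s ≤ y + l * s)
    (hpast : ∃ l : ℝ, ∀ s : ℝ≥0, pastPath t (fun s ↦ f s) s ≤ y + l * s) :
    concaveMajorant f t ≤ f t + y ↔ dominatingSlope (pastPath t fun s ↦ f s) y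
      + dominatingSlope (futurePath t fun s ↦ f s) y ≤ (f t + y) / t := by
  have hline (l : ℝ) : (∀ u, 0 ≤ u → f u ≤ f t + y + l * (u - t))
      ↔ dominatingSlope (futurePath t fun s ↦ f s) y ≤ l
        ∧ dominatingSlope (pastPath t fun s ↦ f s) y ≤ (f t + y) / t - l := by
    rw [dominatingSlope_le_iff (continuous_futurePath t hf) (by simpa [futurePath]) hfuture,
      dominatingSlope_le_iff (continuous_pastPath ht hf) (by simpa [pastPath, sq, ht]) hpast,
      ← forall_le_line_iff_future_past hf ht, NNReal.forall]
    rfl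
  rw [concaveMajorant_le_iff (mod_cast ht.bot_lt)
    (exists_concaveOn_ge_of_future_past hf ht hfuture hpast)]
  simp only [hline]
  refine ⟨fun ⟨l, hl, hl'⟩ ↦ by linarith, fun h ↦ ⟨_, le_rfl, by linarith⟩⟩

end ConcaveMajorant

section Density

lemma setLIntegral_Icc_ofReal_of_hasDerivAt {G g : ℝ → ℝ} {a b : ℝ} (hab : a ≤ b)
    (hderiv : ∀ x ∈ Icc a b, HasDerivAt G (g x) x) (hcont : ContinuousOn g (Icc a b))
    (hnonneg : ∀ x ∈ Icc a b, 0 ≤ g x) :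
    ∫⁻ x in Icc a b, ENNReal.ofReal (g x) = ENNReal.ofReal (G b - G a) := by
  rw [← uIcc_of_le hab] at hderiv hcont
  have hint := hcont.intervalIntegrable (μ := volume)
  rw [← intervalIntegral.integral_eq_sub_of_hasDerivAt hderiv hint,
    intervalIntegral.integral_of_le hab, ofReal_integral_eq_lintegral_ofReal hint.1
      (ae_restrict_of_forall_mem measurableSet_Ioc fun x hx ↦ hnonneg x (Ioc_subset_Icc_self hx))]
  exact setLIntegral_congr Ioc_ae_eq_Icc.symm

/-- On `[0, ∞)`, the distribution function of the sum of two independent exponential variables of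
rate `1`. -/
def gammaTwoCDF (w : ℝ) : ℝ := 1 - Real.exp (-w) * (1 + w)

lemma gammaTwoCDF_zero : gammaTwoCDF 0 = 0 := by simp [gammaTwoCDF]

lemma hasDerivAt_gammaTwoCDF (w : ℝ) : HasDerivAt gammaTwoCDF (w * Real.exp (-w)) w := by
  convert! (((hasDerivAt_id w).neg.exp.mul ((hasDerivAt_id w).const_add 1)).const_sub 1) using 1
  simp only [Pi.neg_apply, id_eq]
  ring

lemma lintegral_expMeasure (r : ℝ) {g : ℝ → ℝ≥0∞} (hg : Measurable g) :
    ∫⁻ a, g a ∂expMeasure r = ∫⁻ a, exponentialPDF r a * g a :=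
  lintegral_withDensity_eq_lintegral_mul _ (measurable_exponentialPDFReal r).ennreal_ofReal hg

lemma exponentialPDF_mul_expMeasure_Iic_sub {r : ℝ} (hr : 0 < r) (m a : ℝ) :
    exponentialPDF r a * expMeasure r (Iic (m - a)) = (Icc 0 m).indicator
      (fun a ↦ ENNReal.ofReal (r * Real.exp (-(r * a)) - r * Real.exp (-(r * m)))) a := by
  rw [expMeasure_Iic hr]
  obtain ha | ha := lt_or_ge a 0
  · rw [exponentialPDF_of_neg ha, zero_mul, indicator_of_notMem fun h ↦ ha.not_ge h.1]
  obtain ham | ham := lt_or_ge m a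
  · rw [max_eq_right (sub_nonpos.2 ham.le), indicator_of_notMem fun h ↦ ham.not_ge h.2]
    simp
  · have ham' : a ∈ Icc 0 m := ⟨ha, ham⟩
    rw [indicator_of_mem ham', exponentialPDF_of_nonneg ha, ← ENNReal.ofReal_mul (by positivity),
      max_eq_left (sub_nonneg.2 ham), mul_sub, mul_one, mul_assoc, ← Real.exp_add]
    ring_nf

lemma prod_expMeasure_add_le {r : ℝ} (hr : 0 < r) (m : ℝ) :
    ((expMeasure r).prod (expMeasure r)) {p | p.1 + p.2 ≤ m}
      = ENNReal.ofReal (gammaTwoCDF (r * max m 0)) := by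
  have := isProbabilityMeasure_expMeasure hr
  have hsection (a : ℝ) : Prod.mk a ⁻¹' {p : ℝ × ℝ | p.1 + p.2 ≤ m} = Iic (m - a) := by
    ext b
    simp [le_sub_iff_add_le']
  have hmeas : Measurable fun a ↦ expMeasure r (Iic (m - a)) := by
    simp only [expMeasure_Iic hr]
    fun_prop
  rw [Measure.prod_apply (measurableSet_le (by fun_prop) measurable_const)]
  simp only [hsection]
  rw [lintegral_expMeasure r hmeas]
  simp only [exponentialPDF_mul_expMeasure_Iic_sub hr]
  rw [lintegral_indicator measurableSet_Icc]
  obtain hm | hm := lt_or_ge m 0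
  · simp [Icc_eq_empty hm.not_ge, max_eq_right hm.le, gammaTwoCDF_zero]
  rw [setLIntegral_Icc_ofReal_of_hasDerivAt
    (G := fun a ↦ -Real.exp (-(r * a)) - a * (r * Real.exp (-(r * m)))) hm, max_eq_left hm]
  · simp only [gammaTwoCDF, mul_zero, neg_zero, Real.exp_zero]
    ring_nf
  · intro a _
    convert! (hasDerivAt_neg_exp_mul_exp (r := r) (x := a)).sub ((hasDerivAt_id a).mul_const
      (r * Real.exp (-(r * m)))) using 1
    simp
  · fun_prop
  · intro a ha
    rw [sub_nonneg]
    gcongr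
    exact ha.2

variable {t : ℝ≥0}

lemma jointDensKBX_eq_gaussianPDFReal_mul (ht : t ≠ 0) {u b : ℝ} (hu : 0 ≤ u) (hbu : 0 ≤ b + u) :
    jointDensKBX t u (b + 2 * u) = gaussianPDFReal 0 t b * (2 * u * (b + u) / t
      * Real.exp (-(2 * u * (b + u) / t)) * (2 * (b + 2 * u) / t)) := by
  have ht' : (0 : ℝ) < t := mod_cast ht.bot_lt
  obtain rfl | hu := hu.eq_or_lt
  · simp [jointDensKBX]
  obtain hbu | hbu := hbu.eq_or_lt
  · rw [jointDensKBX, if_neg (by rintro ⟨-, h⟩; linarith), ← hbu]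
    simp
  rw [jointDensKBX, if_pos ⟨hu, by linarith⟩, stdGaussianPDF, gaussianPDFReal]
  have hpow : (t : ℝ) ^ (-(5 : ℝ) / 2) = ((t : ℝ) ^ 2)⁻¹ * (√t)⁻¹ := by
    rw [Real.sqrt_eq_rpow, ← Real.rpow_natCast, ← Real.rpow_neg ht'.le, ← Real.rpow_neg ht'.le,
      ← Real.rpow_add ht']
    norm_num
  have hexp : Real.exp (-((b + 2 * u) / √t) ^ 2 / 2)
      = Real.exp (-(b - 0) ^ 2 / (2 * t)) * Real.exp (-(2 * u * (b + u) / t)) := by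
    rw [← Real.exp_add, div_pow, Real.sq_sqrt ht'.le]
    congr 1
    field_simp
    ring
  rw [hpow, hexp, Real.sqrt_mul (by positivity) (t : ℝ), mul_inv]
  field_simp
  ring

lemma setLIntegral_Iic_jointDensKBX_eq_Icc (ht : t ≠ 0) (y b : ℝ) :
    ∫⁻ u in Iic y, ENNReal.ofReal (jointDensKBX t u (b + 2 * u))
      = ∫⁻ u in Icc (max 0 (-b)) y, ENNReal.ofReal (gaussianPDFReal 0 t b * (2 * u * (b + u) / t
        * Real.exp (-(2 * u * (b + u) / t)) * (2 * (b + 2 * u) / t))) := by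
  rw [← lintegral_indicator measurableSet_Iic, ← lintegral_indicator measurableSet_Icc]
  refine lintegral_congr fun u ↦ ?_
  by_cases hu : max 0 (-b) ≤ u
  · have hbu : 0 ≤ b + u := by linarith [(le_max_right 0 (-b)).trans hu]
    simp only [indicator, mem_Iic, mem_Icc, hu, true_and,
      jointDensKBX_eq_gaussianPDFReal_mul ht ((le_max_left 0 (-b)).trans hu) hbu]
  · have hu' : ¬ (0 < u ∧ u < b + 2 * u) := fun h ↦ hu (max_le h.1.le (by linarith))
    simp [indicator, hu, hu', jointDensKBX]

lemma setLIntegral_Iic_jointDensKBX (ht : t ≠ 0) {y : ℝ} (hy : 0 ≤ y) (b : ℝ) :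
    ∫⁻ u in Iic y, ENNReal.ofReal (jointDensKBX t u (b + 2 * u))
      = gaussianPDF 0 t b * ENNReal.ofReal (gammaTwoCDF (2 * y * max ((b + y) / t) 0)) := by
  have ht' : (0 : ℝ) < t := mod_cast ht.bot_lt
  rw [setLIntegral_Iic_jointDensKBX_eq_Icc ht]
  obtain hya | hay := lt_or_ge y (max 0 (-b))
  · have hby : b + y < 0 := by
      by_contra! h
      exact hya.not_ge (max_le hy (by linarith))
    rw [Icc_eq_empty hya.not_ge, max_eq_right (div_neg_of_neg_of_pos hby ht').le]
    simp [gammaTwoCDF_zero]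
  have hby : 0 ≤ b + y := by linarith [(le_max_right 0 (-b)).trans hay]
  have hlower : 2 * max 0 (-b) * (b + max 0 (-b)) / t = 0 := by
    obtain h | h := max_choice 0 (-b) <;> simp [h]
  rw [setLIntegral_Icc_ofReal_of_hasDerivAt
    (G := fun u ↦ gaussianPDFReal 0 t b * gammaTwoCDF (2 * u * (b + u) / t)) hay, hlower,
    gammaTwoCDF_zero, mul_zero, sub_zero, max_eq_left (by positivity), gaussianPDF,
    ENNReal.ofReal_mul (gaussianPDFReal_nonneg _ _ _), mul_div_assoc]
  · intro u _
    have hinner : HasDerivAt (fun u : ℝ ↦ 2 * u * (b + u) / t) (2 * (b + 2 * u) / t) u := by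
      convert! (((hasDerivAt_id u).const_mul 2).mul
        ((hasDerivAt_id u).const_add b)).div_const (t : ℝ) using 1
      simp only [id_eq]
      ring
    exact ((hasDerivAt_gammaTwoCDF _).comp u hinner).const_mul _
  · fun_prop
  · intro u hu
    have hu₀ : 0 ≤ u := (le_max_left 0 (-b)).trans hu.1
    have hbu : 0 ≤ b + u := by linarith [(le_max_right 0 (-b)).trans hu.1]
    have hbu' : 0 ≤ b + 2 * u := by linarith
    have := gaussianPDFReal_nonneg 0 t b
    positivity

lemma integral_jointDensKBX (t : ℝ) {z : ℝ} (hz : 0 ≤ z) :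
    ∫ u, jointDensKBX t u z
      = 4 * z * t ^ (-(5 : ℝ) / 2) * stdGaussianPDF (z / √t) * (z ^ 3 / 6) := by
  have hsupport : (fun u ↦ jointDensKBX t u z) = (Ioo 0 z).indicator fun u ↦
      4 * z * t ^ (-(5 : ℝ) / 2) * stdGaussianPDF (z / √t) * (u * (z - u)) := by
    ext u
    simp only [jointDensKBX, indicator, mem_Ioo]
    split_ifs <;> ring
  rw [hsupport, integral_indicator measurableSet_Ioo, integral_const_mul,
    ← integral_Ioc_eq_integral_Ioo, ← intervalIntegral.integral_of_le hz]
  simp only [mul_sub, ← sq]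
  rw [intervalIntegral.integral_sub (Continuous.intervalIntegrable (by fun_prop) _ _)
    (Continuous.intervalIntegrable (by fun_prop) _ _), intervalIntegral.integral_mul_const,
    integral_id, integral_pow]
  ring

end Density

section JointLaw

/-- The candidate for the law of `(K t - B t, B t)`: the law of `(y, b)` for which `(y, b + 2 * y)`
has density `jointDensKBX t`. -/
def gapValueLaw (t : ℝ) : Measure (ℝ × ℝ) :=
  volume.withDensity fun p ↦ ENNReal.ofReal (jointDensKBX t p.1 (p.2 + 2 * p.1))

lemma measurable_jointDensKBX (t : ℝ) : Measurable fun p : ℝ × ℝ ↦ jointDensKBX t p.1 p.2 := by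
  unfold jointDensKBX stdGaussianPDF
  exact Measurable.ite ((measurableSet_lt measurable_const measurable_fst).inter
    (measurableSet_lt measurable_fst measurable_snd)) (by fun_prop) measurable_const

lemma measurePreserving_shear :
    MeasurePreserving (fun p : ℝ × ℝ ↦ (p.1, p.2 + 2 * p.1)) volume volume :=
  (MeasurePreserving.id volume).skew_product (g := fun y b : ℝ ↦ b + 2 * y) (by fun_prop)
    (ae_of_all _ fun y ↦ (measurePreserving_add_right volume (2 * y)).map_eq)

lemma map_shear_gapValueLaw (t : ℝ) :
    (gapValueLaw t).map (fun p ↦ (p.1, p.2 + 2 * p.1))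
      = volume.withDensity fun p ↦ ENNReal.ofReal (jointDensKBX t p.1 p.2) := by
  have hshear := measurePreserving_shear
  ext A hA
  rw [Measure.map_apply hshear.measurable hA, gapValueLaw,
    withDensity_apply _ (hshear.measurable hA), withDensity_apply _ hA]
  exact hshear.setLIntegral_comp_preimage hA (measurable_jointDensKBX t).ennreal_ofReal

lemma gapValueLaw_prod (t : ℝ) {A C : Set ℝ} (hA : MeasurableSet A) (hC : MeasurableSet C) :
    gapValueLaw t (A ×ˢ C)
      = ∫⁻ b in C, ∫⁻ u in A, ENNReal.ofReal (jointDensKBX t u (b + 2 * u)) := by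
  rw [gapValueLaw, withDensity_apply _ (hA.prod hC), Measure.volume_eq_prod,
    ← Measure.prod_restrict, lintegral_prod_symm]
  exact ((measurable_jointDensKBX t).comp measurePreserving_shear.measurable).ennreal_ofReal
    |>.aemeasurable

lemma gapValueLaw_Iic_zero_prod {t : ℝ≥0} (ht : t ≠ 0) {C : Set ℝ} (hC : MeasurableSet C) :
    gapValueLaw t (Iic 0 ×ˢ C) = 0 := by
  simp [gapValueLaw_prod t measurableSet_Iic hC, setLIntegral_Iic_jointDensKBX ht le_rfl,
    gammaTwoCDF_zero]

lemma measurableSet_add_le_div_and_mem (t y : ℝ) {C : Set ℝ} (hC : MeasurableSet C) :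
    MeasurableSet {p : ℝ × ℝ × ℝ | p.1 + p.2.1 ≤ (p.2.2 + y) / t ∧ p.2.2 ∈ C} := by
  have hle : MeasurableSet {p : ℝ × ℝ × ℝ | p.1 + p.2.1 ≤ (p.2.2 + y) / t} :=
    measurableSet_le (by fun_prop) (by fun_prop)
  exact hle.inter (measurable_snd.comp measurable_snd hC)

lemma prod_expMeasure_prod_gaussianReal_eq_gapValueLaw {t : ℝ≥0} (ht : t ≠ 0) {y : ℝ} (hy : 0 < y)
    {C : Set ℝ} (hC : MeasurableSet C) :
    (expMeasure (2 * y)).prod ((expMeasure (2 * y)).prod (gaussianReal 0 t))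
        {p | p.1 + p.2.1 ≤ (p.2.2 + y) / t ∧ p.2.2 ∈ C}
      = gapValueLaw t (Iic y ×ˢ C) := by
  have hr : 0 < 2 * y := by positivity
  have := isProbabilityMeasure_expMeasure hr
  have hS := measurableSet_add_le_div_and_mem t y hC
  have hS' := MeasurableEquiv.prodAssoc.measurable hS
  have hsection (b : ℝ) : ((expMeasure (2 * y)).prod (expMeasure (2 * y)))
      ((·, b) ⁻¹' (MeasurableEquiv.prodAssoc ⁻¹'
        {p : ℝ × ℝ × ℝ | p.1 + p.2.1 ≤ (p.2.2 + y) / t ∧ p.2.2 ∈ C}))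
      = C.indicator
        (fun b ↦ ENNReal.ofReal (gammaTwoCDF (2 * y * max ((b + y) / t) 0))) b := by
    by_cases hb : b ∈ C <;> simp [hb, MeasurableEquiv.prodAssoc, ← prod_expMeasure_add_le hr]
  rw [← Measure.prodAssoc_prod, Measure.map_apply MeasurableEquiv.prodAssoc.measurable hS,
    Measure.prod_apply_symm hS', gapValueLaw_prod _ measurableSet_Iic hC]
  simp only [hsection, setLIntegral_Iic_jointDensKBX ht hy.le]
  rw [lintegral_indicator hC, gaussianReal_of_var_ne_zero _ ht,
    setLIntegral_withDensity_eq_setLIntegral_mul _ (measurable_gaussianPDF _ _)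
      (by unfold gammaTwoCDF; fun_prop) hC]
  rfl

variable {Ω : Type*} [MeasurableSpace Ω] {P : Measure Ω}

lemma aemeasurable_of_nullMeasurableSet_le_pos {Y : Ω → ℝ} (hY : ∀ᵐ ω ∂P, 0 ≤ Y ω)
    (h : ∀ y, 0 < y → NullMeasurableSet {ω | Y ω ≤ y} P) : AEMeasurable Y P := by
  have hnull (x : ℝ) : NullMeasurableSet (Y ⁻¹' Iic x) P := by
    obtain hx | hx := lt_or_ge x 0
    · refine NullMeasurableSet.of_null (measure_mono_null (fun ω hω ↦ ?_) (ae_iff.1 hY))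
      exact not_le.2 (lt_of_le_of_lt hω hx)
    · have hinter : Y ⁻¹' Iic x = ⋂ n : ℕ, {ω | Y ω ≤ x + 1 / (n + 1)} := by
        ext ω
        simp only [mem_preimage, mem_Iic, mem_iInter, mem_ofPred_eq]
        refine ⟨fun hω n ↦ hω.trans (le_add_of_nonneg_right (by positivity)), fun hω ↦ ?_⟩
        have hlim : Tendsto (fun n : ℕ ↦ x + 1 / ((n : ℝ) + 1)) atTop (𝓝 x) := by
          simpa using tendsto_one_div_add_atTop_nhds_zero_nat.const_add x
        exact ge_of_tendsto' hlim hω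
      rw [hinter]
      exact NullMeasurableSet.iInter fun n ↦ h _ (by positivity)
  exact NullMeasurable.aemeasurable (measurable_of_Iic (δ := NullMeasurableSpace Ω P) hnull)

lemma map_prod_eq_of_measure_le_pos [IsFiniteMeasure P] {Y Z : Ω → ℝ} {ν : Measure (ℝ × ℝ)}
    (hY : AEMeasurable Y P) (hZ : AEMeasurable Z P)
    (h : ∀ y, 0 < y → ∀ C, MeasurableSet C → P ({ω | Y ω ≤ y} ∩ Z ⁻¹' C) = ν (Iic y ×ˢ C))
    (hν : ∀ C, MeasurableSet C → ν (Iic 0 ×ˢ C) = 0) : P.map (fun ω ↦ (Y ω, Z ω)) = ν := by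
  have hYZ : AEMeasurable (fun ω ↦ (Y ω, Z ω)) P := hY.prodMk hZ
  have hslice (μ : Measure (ℝ × ℝ)) {A : Set ℝ} (hA : MeasurableSet A) (C : Set ℝ) :
      (μ.restrict (univ ×ˢ C)).map Prod.fst A = μ (A ×ˢ C) := by
    rw [Measure.map_apply measurable_fst hA, Measure.restrict_apply (measurable_fst hA),
      ← prod_univ, prod_inter_prod, inter_univ, univ_inter]
  refine Measure.ext_prod fun {A C} hA hC ↦ ?_
  rw [← hslice _ hA, ← hslice _ hA]
  congr 1
  refine measure_eq_of_Iic_pos (fun y hy ↦ ?_) ((hslice _ measurableSet_Iic _).trans (hν C hC))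
  rw [hslice _ measurableSet_Iic, hslice _ measurableSet_Iic,
    Measure.map_apply_of_aemeasurable hYZ (measurableSet_Iic.prod hC), ← h y hy C hC]
  rfl

variable {B : ℝ → Ω → ℝ} {t : ℝ≥0} {y : ℝ}

lemma measurable_dominatingSlope_past_future (hB : ∀ s, Measurable (B s)) (t : ℝ≥0) (y : ℝ) :
    Measurable fun ω ↦ (dominatingSlope (pastPath t fun s ↦ B s ω) y,
      dominatingSlope (futurePath t fun s ↦ B s ω) y, B t ω) := by
  have hWm : Measurable fun ω ↦ (fun s : ℝ≥0 ↦ B s ω) :=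
    measurable_pi_lambda _ fun s ↦ hB s
  have hslope := measurable_dominatingSlope_path y
  exact (hslope.comp ((measurable_pastPath t).comp hWm)).prodMk
    ((hslope.comp ((measurable_futurePath t).comp hWm)).prodMk (hB t))

variable [IsProbabilityMeasure P]

lemma ae_le_Kproc_and_Kproc_le_iff (hB : IsBrownianMotion P B) (ht : t ≠ 0) (hy : 0 < y) :
    ∀ᵐ ω ∂P, B t ω ≤ Kproc B t ω ∧
      (Kproc B t ω ≤ B t ω + y ↔ dominatingSlope (pastPath t fun s ↦ B s ω) y
        + dominatingSlope (futurePath t fun s ↦ B s ω) y ≤ (B t ω + y) / t) := by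
  have hW := hB.isBrownianReal
  have hWm : Measurable fun ω ↦ (fun s : ℝ≥0 ↦ B s ω) :=
    measurable_pi_lambda _ fun s ↦ hB.measurable s
  filter_upwards [hW.cont,
    ae_exists_forall_le_line (hW.shift t)
      (fun s ↦ (measurable_pi_apply s).comp ((measurable_futurePath t).comp hWm)) hy,
    ae_exists_forall_le_line (isBrownianReal_pastPath hW ht)
      (fun s ↦ (measurable_pi_apply s).comp ((measurable_pastPath t).comp hWm)) hy]
    with ω hcont hfuture hpast
  exact ⟨le_concaveMajorant (exists_concaveOn_ge_of_future_past hcont ht hfuture hpast)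
      fun c _ hc ↦ hc t t.2, concaveMajorant_le_add_iff hcont ht hy.le hfuture hpast⟩

lemma Kproc_sub_le_inter_ae_eq (hB : IsBrownianMotion P B) (ht : t ≠ 0) (hy : 0 < y) (C : Set ℝ) :
    ({ω | Kproc B t ω - B t ω ≤ y} ∩ B t ⁻¹' C : Set Ω) =ᵐ[P]
      (fun ω ↦ (dominatingSlope (pastPath t fun s ↦ B s ω) y,
        dominatingSlope (futurePath t fun s ↦ B s ω) y, B t ω)) ⁻¹'
        {p | p.1 + p.2.1 ≤ (p.2.2 + y) / t ∧ p.2.2 ∈ C} := by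
  refine eventuallyEq_set.2 ?_
  filter_upwards [ae_le_Kproc_and_Kproc_le_iff hB ht hy] with ω hω
  simp only [mem_inter_iff, mem_preimage, mem_ofPred_eq, sub_le_iff_le_add', hω.2]

lemma aemeasurable_Kproc_sub (hB : IsBrownianMotion P B) (ht : t ≠ 0) :
    AEMeasurable (fun ω ↦ Kproc B t ω - B t ω) P := by
  refine aemeasurable_of_nullMeasurableSet_le_pos ?_ fun y hy ↦ ?_
  · filter_upwards [ae_le_Kproc_and_Kproc_le_iff hB ht one_pos] with ω hω
    exact sub_nonneg.2 hω.1
  · have hae := Kproc_sub_le_inter_ae_eq hB ht hy univ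
    rw [preimage_univ, inter_univ] at hae
    exact (measurable_dominatingSlope_past_future hB.measurable t y
      (measurableSet_add_le_div_and_mem t y .univ)).nullMeasurableSet.congr hae.symm

lemma measure_Kproc_sub_le_inter (hB : IsBrownianMotion P B) (ht : t ≠ 0) (hy : 0 < y)
    {C : Set ℝ} (hC : MeasurableSet C) :
    P ({ω | Kproc B t ω - B t ω ≤ y} ∩ B t ⁻¹' C) = gapValueLaw t (Iic y ×ˢ C) := by
  rw [measure_congr (Kproc_sub_le_inter_ae_eq hB ht hy C), ← Measure.map_apply
      (measurable_dominatingSlope_past_future hB.measurable t y)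
      (measurableSet_add_le_div_and_mem t y hC),
    ← prod_expMeasure_prod_gaussianReal_eq_gapValueLaw ht hy hC,
    ← map_dominatingSlope_past_future hB.isBrownianReal (fun s ↦ hB.measurable s) ht hy]

theorem map_Kproc_sub_prod (hB : IsBrownianMotion P B) (ht : t ≠ 0) :
    P.map (fun ω ↦ (Kproc B t ω - B t ω, B t ω)) = gapValueLaw t :=
  map_prod_eq_of_measure_le_pos (aemeasurable_Kproc_sub hB ht) (hB.measurable t).aemeasurable
    (fun _ hy _ hC ↦ measure_Kproc_sub_le_inter hB ht hy hC)
    fun _ hC ↦ gapValueLaw_Iic_zero_prod ht hC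

theorem map_Kproc_sub_Xproc (hB : IsBrownianMotion P B) (ht : t ≠ 0) :
    P.map (fun ω ↦ (Kproc B t ω - B t ω, Xproc B t ω))
      = volume.withDensity fun p ↦ ENNReal.ofReal (jointDensKBX t p.1 p.2) := by
  rw [← map_shear_gapValueLaw, ← map_Kproc_sub_prod hB ht,
    AEMeasurable.map_map_of_aemeasurable measurePreserving_shear.measurable.aemeasurable
      ((aemeasurable_Kproc_sub hB ht).prodMk (hB.measurable t).aemeasurable)]
  congr! 3 with ω
  simp only [Xproc, Function.comp_apply]
  ring

end JointLaw

/-- For every `t > 0`, the pair `(K(t) - B(t), X(t))` has joint density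
`jointDensKBX t` on `ℝ²`; in particular the conditional density of `K(t) - B(t)` given
`X(t) = z` is `y ↦ 6y(z - y)/z³` on `(0, z)`, independently of `t`. -/
theorem joint_density_KB_X {Ω : Type*} [MeasurableSpace Ω]
    (P : Measure Ω) [IsProbabilityMeasure P] (B : ℝ → Ω → ℝ)
    (hB : IsBrownianMotion P B) (t : ℝ) (ht : 0 < t) :
    P.map (fun ω => ((Kproc B t ω - B t ω, Xproc B t ω) : ℝ × ℝ))
      = (volume : Measure (ℝ × ℝ)).withDensity
          (fun p => ENNReal.ofReal (jointDensKBX t p.1 p.2)) ∧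
    (∀ z : ℝ, 0 < z → ∀ y : ℝ,
      (if 0 < y ∧ y < z then 6 * y * (z - y) / z ^ 3 else 0)
          * (∫ u : ℝ, jointDensKBX t u z)
        = jointDensKBX t y z) := by
  refine ⟨?_, fun z hz y ↦ ?_⟩
  · lift t to ℝ≥0 using ht.le
    exact map_Kproc_sub_Xproc hB (NNReal.coe_pos.1 ht).ne'
  · rw [integral_jointDensKBX t hz.le, jointDensKBX]
    split_ifs
    · field_simp
    · rw [zero_mul]
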